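/- arXiv:2509.16447 — 2 statements merged into one kernel-verified Lean document; each statement's English description precedes it below -/
import Mathlib

section
/- (Local conditional scores are exact for conditional projective compositions, at all noise levels.) Let n ∈ ℕ, let J be a finite set of conditioner indices, let {M_j : j ∈ J} be pairwise disjoint subsets of Fin n, and let B = Fin n \ (⋃_{j∈J} M_j). Let g : ℝ^B → ℝ be a strictly positive integrable function and, for each j ∈ J, let f_j, h_j : ℝ^{M_j} → ℝ be strictly positive integrable functions (f_j representing the conditional factor p(x_{M_j}|c_j) and h_j the unconditional factor p(x_{M_j}|∅)). For each subset 𝒥 ⊆ J define p_𝒥 : ℝⁿ → ℝ by p_𝒥(x) = g(x_B) · ∏_{j∈𝒥} f_j(x_{M_j}) · ∏_{j∈J\𝒥} h_j(x_{M_j}). Then for every t > 0, every 𝒥 ⊆ J, every x ∈ ℝⁿ, and every coordinate i ∈ Fin n: if i ∈ M_j with j ∈ 𝒥 then ∂_i log N_t[p_𝒥](x) = ∂_i log N_t[f_j](x_{M_j}); if i ∈ M_j with j ∉ 𝒥 then ∂_i log N_t[p_𝒥](x) = ∂_i log N_t[h_j](x_{M_j}); and if i ∈ B then ∂_i log N_t[p_𝒥](x)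 = ∂_i log N_t[g](x_B). In particular, the score of the noised composition at coordinate i depends only on the coordinates in the block containing i and on at most the single conditioner j with i ∈ M_j. -/
open Real MeasureTheory

/-- The noising operator in dimension `d = card ι`:
`N_t[p](x) = ∫ p(y) · (2πt²)^(−d/2) · exp(−‖x−y‖²/(2t²)) dy`,
where `‖x−y‖² = ∑ i, (x i − y i)²` is the Euclidean norm squared. -/
noncomputable def noisingPi {ι : Type*} [Fintype ι] (p : (ι → ℝ) → ℝ) (t : ℝ)
    (x : ι → ℝ) : ℝ :=
  ∫ y : ι → ℝ, p y * ((2 * π * t ^ 2) ^ (-(Fintype.card ι : ℝ) / 2) *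
    Real.exp (-(∑ i, (x i - y i) ^ 2) / (2 * t ^ 2)))


theorem sigma_symm_apply {ι K : Type*} {κ : K → Type*} (e : (Σ k, κ k) ≃ ι)
    (y : ∀ k, κ k → ℝ) (k : K) (a : κ k) :
    y (e.symm (e ⟨k, a⟩)).1 (e.symm (e ⟨k, a⟩)).2 = y k a := by
  rw [e.symm_apply_apply]

/-- Regrouping coordinates into blocks, as a measurable equivalence. -/
noncomputable def blockEquiv {ι K : Type*} {κ : K → Type*} (e : (Σ k, κ k) ≃ ι) :
    (ι → ℝ) ≃ᵐ (∀ k, κ k → ℝ) where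
  toFun x := fun k a => x (e ⟨k, a⟩)
  invFun y := fun i => y (e.symm i).1 (e.symm i).2
  left_inv x := by
    funext i
    simp
  right_inv y := by
    funext k a
    exact sigma_symm_apply e y k a
  measurable_toFun := by
    refine measurable_pi_lambda _ fun k => measurable_pi_lambda _ fun a => ?_
    exact measurable_pi_apply _
  measurable_invFun := by
    refine measurable_pi_lambda _ fun i => ?_
    exact (measurable_pi_apply (e.symm i).2).comp (measurable_pi_apply (e.symm i).1)

theorem blockEquiv_symm_mp {ι K : Type*} {κ : K → Type*} [Fintype ι] [Fintype K]
    [∀ k, Fintype (κ k)] (e : (Σ k, κ k) ≃ ι) :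
    MeasurePreserving (blockEquiv e).symm volume volume where
  measurable := (blockEquiv e).symm.measurable
  map_eq := by
    refine (Measure.pi_eq fun s _ => ?_).symm
    rw [MeasurableEquiv.map_apply]
    have : (blockEquiv e).symm ⁻¹' (Set.univ.pi s) =
        Set.univ.pi (fun k => Set.univ.pi (fun a : κ k => s (e ⟨k, a⟩))) := by
      ext y
      simp only [Set.mem_preimage, Set.mem_univ_pi]
      constructor
      · intro H k a
        have := H (e ⟨k, a⟩)
        change y (e.symm (e ⟨k, a⟩)).1 (e.symm (e ⟨k, a⟩)).2 ∈ _ at this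
        rwa [sigma_symm_apply e y k a] at this
      · intro H i
        have := H (e.symm i).1 (e.symm i).2
        simpa [blockEquiv] using this
    rw [this, volume_pi_pi]
    simp_rw [volume_pi_pi]
    rw [← e.prod_comp, Fintype.prod_sigma]

theorem noisingPi_prod {ι K : Type*} {κ : K → Type*} [Fintype ι] [Fintype K]
    [∀ k, Fintype (κ k)] (e : (Σ k, κ k) ≃ ι) (F : ∀ k, (κ k → ℝ) → ℝ) (t : ℝ) (ht : 0 < t)
    (x : ι → ℝ) :
    noisingPi (fun x : ι → ℝ => ∏ k, F k (fun a => x (e ⟨k, a⟩))) t x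
      = ∏ k, noisingPi (F k) t (fun a => x (e ⟨k, a⟩)) := by
  unfold noisingPi
  rw [← integral_fintype_prod_volume_eq_prod, ← (blockEquiv_symm_mp e).integral_comp']
  congr 1
  funext y
  have hy : ∀ k a, (blockEquiv e).symm y (e ⟨k, a⟩) = y k a := by
    intro k a
    exact sigma_symm_apply e y k a
  have hc : (0 : ℝ) < 2 * π * t ^ 2 := by positivity
  simp only [hy, Finset.prod_mul_distrib]
  congr 2
  · rw [← Real.rpow_sum_of_pos hc, ← Fintype.card_congr e, Fintype.card_sigma]
    push_cast
    rw [← Finset.sum_div, Finset.sum_neg_distrib]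
  · rw [← Real.exp_sum, ← e.sum_comp, Fintype.sum_sigma, ← Finset.sum_div,
      Finset.sum_neg_distrib]
    simp only [hy]

theorem gauss_cont {ι : Type*} [Fintype ι] (t c : ℝ) (x : ι → ℝ) :
    Continuous fun y : ι → ℝ => c * Real.exp (-(∑ i, (x i - y i) ^ 2) / (2 * t ^ 2)) := by
  fun_prop

theorem noising_integrable {ι : Type*} [Fintype ι] (F : (ι → ℝ) → ℝ) (hF : Integrable F)
    (t c : ℝ) (x : ι → ℝ) :
    Integrable fun y : ι → ℝ => F y * (c *
      Real.exp (-(∑ i, (x i - y i) ^ 2) / (2 * t ^ 2))) := by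
  refine hF.mul_bdd (c := |c|) (gauss_cont t c x).aestronglyMeasurable ?_
  refine Filter.Eventually.of_forall fun y => ?_
  rw [norm_mul, Real.norm_eq_abs, Real.norm_eq_abs, Real.abs_exp]
  refine mul_le_of_le_one_right (abs_nonneg _) (Real.exp_le_one_iff.2 ?_)
  rw [neg_div, neg_nonpos]
  have : 0 ≤ ∑ i, (x i - y i) ^ 2 := Finset.sum_nonneg fun i _ => sq_nonneg _
  positivity

theorem noisingPi_pos {ι : Type*} [Fintype ι] (F : (ι → ℝ) → ℝ) (hF : Integrable F)
    (hpos : ∀ z, 0 < F z) (t : ℝ) (ht : 0 < t) (x : ι → ℝ) : 0 < noisingPi F t x := by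
  unfold noisingPi
  have hp : ∀ y : ι → ℝ, 0 < F y * ((2 * π * t ^ 2) ^ (-(Fintype.card ι : ℝ) / 2) *
      Real.exp (-(∑ i, (x i - y i) ^ 2) / (2 * t ^ 2))) := by
    intro y
    have := hpos y
    positivity
  rw [integral_pos_iff_support_of_nonneg (fun y => (hp y).le) (noising_integrable F hF t _ x)]
  have : (Function.support fun y : ι → ℝ => F y * ((2 * π * t ^ 2) ^ (-(Fintype.card ι : ℝ) / 2) *
      Real.exp (-(∑ i, (x i - y i) ^ 2) / (2 * t ^ 2)))) = Set.univ := by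
    ext y
    simp only [Function.mem_support, Set.mem_univ, iff_true]
    exact (hp y).ne'
  rw [this]
  exact (Measure.measure_univ_pos).2 (NeZero.ne _)

/-- Derivative of the gaussian kernel. -/
noncomputable def gaussD {ι : Type*} [Fintype ι] (t : ℝ) (x y : ι → ℝ) : (ι → ℝ) →L[ℝ] ℝ :=
  Real.exp (-(∑ i, (x i - y i) ^ 2) / (2 * t ^ 2)) •
    ∑ i, (-(x i - y i) / t ^ 2) • (ContinuousLinearMap.proj (R := ℝ) (φ := fun _ : ι => ℝ) i)

theorem gaussD_hasFDerivAt {ι : Type*} [Fintype ι] (t : ℝ) (ht : 0 < t) (x y : ι → ℝ) :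
    HasFDerivAt (fun x : ι → ℝ => Real.exp (-(∑ i, (x i - y i) ^ 2) / (2 * t ^ 2)))
      (gaussD t x y) x := by
  have h1 : ∀ i : ι, HasFDerivAt (fun x : ι → ℝ => (x i - y i) ^ 2)
      ((2 * (x i - y i)) • (ContinuousLinearMap.proj (R := ℝ) (φ := fun _ : ι => ℝ) i)) x := by
    intro i
    have := ((hasFDerivAt_apply (𝕜 := ℝ) i x).sub_const (y i)).pow 2
    simpa using this
  have h2 := (HasFDerivAt.fun_sum (u := Finset.univ) fun i _ => h1 i).neg.mul_const
    ((2 * t ^ 2)⁻¹)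
  have h3 := h2.exp
  simp only [div_eq_mul_inv]
  refine h3.congr_fderiv ?_
  unfold gaussD
  ext v
  simp only [_root_.smul_apply, _root_.sum_apply, smul_eq_mul,
    _root_.neg_apply, ContinuousLinearMap.proj_apply, div_eq_mul_inv]
  congr 1
  rw [← Finset.sum_neg_distrib, Finset.mul_sum]
  refine Finset.sum_congr rfl fun i _ => ?_
  field_simp

theorem gaussD_bound {ι : Type*} [Fintype ι] (t : ℝ) (ht : 0 < t) (x y : ι → ℝ) :
    ‖gaussD t x y‖ ≤ ∑ _i : ι, (1 + 2 * t ^ 2) / t ^ 2 := by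
  unfold gaussD
  rw [Finset.smul_sum]
  refine (norm_sum_le _ _).trans (Finset.sum_le_sum fun i _ => ?_)
  have hproj : ‖(ContinuousLinearMap.proj (R := ℝ) (φ := fun _ : ι => ℝ) i)‖ ≤ 1 := by
    refine ContinuousLinearMap.opNorm_le_bound _ zero_le_one fun v => ?_
    rw [one_mul]
    exact norm_le_pi_norm v i
  rw [norm_smul, norm_smul, ← mul_assoc]
  refine (mul_le_of_le_one_right (by positivity) hproj).trans ?_
  rw [Real.norm_eq_abs, Real.abs_exp, Real.norm_eq_abs, abs_div, abs_neg,
    abs_of_pos (show 0 < t ^ 2 by positivity), ← mul_div_assoc]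
  refine div_le_div_of_nonneg_right ?_ (by positivity)
  set u := (∑ i, (x i - y i) ^ 2) / (2 * t ^ 2) with hu
  have hui : (x i - y i) ^ 2 ≤ 2 * t ^ 2 * u := by
    rw [hu, mul_div_cancel₀ _ (by positivity)]
    exact Finset.single_le_sum (f := fun i => (x i - y i) ^ 2) (fun i _ => sq_nonneg _)
      (Finset.mem_univ i)
  have hu0 : 0 ≤ u := by
    have : 0 ≤ ∑ i, (x i - y i) ^ 2 := Finset.sum_nonneg fun i _ => sq_nonneg _
    positivity
  rw [neg_div, ← hu, Real.exp_neg, inv_mul_le_iff₀ (Real.exp_pos _)]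
  have he := Real.add_one_le_exp u
  have ha : |x i - y i| ≤ 1 + (x i - y i) ^ 2 := by
    rw [← sq_abs]
    nlinarith [sq_nonneg (|x i - y i| - 1), abs_nonneg (x i - y i)]
  have ht2 : 0 < t ^ 2 := by positivity
  calc |x i - y i| ≤ 1 + 2 * t ^ 2 * u := by linarith
    _ ≤ (u + 1) * (1 + 2 * t ^ 2) := by nlinarith
    _ ≤ Real.exp u * (1 + 2 * t ^ 2) := by gcongr

theorem noisingPi_diff {ι : Type*} [Fintype ι] (F : (ι → ℝ) → ℝ) (hF : Integrable F)
    (t : ℝ) (ht : 0 < t) (x : ι → ℝ) : DifferentiableAt ℝ (noisingPi F t) x := by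
  set c : ℝ := (2 * π * t ^ 2) ^ (-(Fintype.card ι : ℝ) / 2) with hc
  have := hasFDerivAt_integral_of_dominated_of_fderiv_le (𝕜 := ℝ) (μ := volume)
    (F := fun (x : ι → ℝ) (y : ι → ℝ) => F y * (c *
      Real.exp (-(∑ i, (x i - y i) ^ 2) / (2 * t ^ 2))))
    (F' := fun x y => (F y * c) • gaussD t x y)
    (bound := fun y => ‖F y * c‖ * ∑ _i : ι, (1 + 2 * t ^ 2) / t ^ 2)
    (x₀ := x) (s := Set.univ) Filter.univ_mem
    (Filter.Eventually.of_forall fun x => (noising_integrable F hF t c x).aestronglyMeasurable)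
    (noising_integrable F hF t c x)
    (by
      refine AEStronglyMeasurable.smul (hF.mul_const c).aestronglyMeasurable ?_
      refine Continuous.aestronglyMeasurable ?_
      unfold gaussD
      fun_prop)
    (Filter.Eventually.of_forall fun y x _ => by
      rw [norm_smul]
      exact mul_le_mul_of_nonneg_left (gaussD_bound t ht x y) (norm_nonneg _))
    ((hF.mul_const c).norm.mul_const _)
    (Filter.Eventually.of_forall fun y x _ => by
      have := (gaussD_hasFDerivAt t ht x y).const_mul (F y * c)
      simpa only [mul_assoc] using this)
  exact this.differentiableAt

theorem score_block {ι K : Type*} {κ : K → Type*} [Fintype ι] [DecidableEq ι] [Fintype K]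
    [∀ k, Fintype (κ k)] [∀ k, DecidableEq (κ k)]
    (e : (Σ k, κ k) ≃ ι) (F : ∀ k, (κ k → ℝ) → ℝ)
    (hpos : ∀ k z, 0 < F k z) (hint : ∀ k, Integrable (F k)) (t : ℝ) (ht : 0 < t)
    (x : ι → ℝ) (k : K) (a : κ k) :
    fderiv ℝ (fun x' => Real.log (noisingPi
        (fun x : ι → ℝ => ∏ k, F k (fun a => x (e ⟨k, a⟩))) t x')) x (Pi.single (e ⟨k, a⟩) 1)
      = fderiv ℝ (fun z => Real.log (noisingPi (F k) t z)) (fun a => x (e ⟨k, a⟩))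
          (Pi.single a 1) := by
  classical
  have hlog : (fun x' : ι → ℝ => Real.log (noisingPi
        (fun x : ι → ℝ => ∏ k, F k (fun a => x (e ⟨k, a⟩))) t x'))
      = fun x' => ∑ k, Real.log (noisingPi (F k) t (fun a => x' (e ⟨k, a⟩))) := by
    funext x'
    rw [noisingPi_prod e F t ht, Real.log_prod]
    exact fun k _ => (noisingPi_pos (F k) (hint k) (hpos k) t ht _).ne'
  let R : ∀ k, (ι → ℝ) →L[ℝ] (κ k → ℝ) := fun k =>
    ContinuousLinearMap.pi fun a =>
      ContinuousLinearMap.proj (R := ℝ) (φ := fun _ : ι => ℝ) (e ⟨k, a⟩)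
  have hd : ∀ k, HasFDerivAt
      (fun x' : ι → ℝ => Real.log (noisingPi (F k) t (fun a => x' (e ⟨k, a⟩))))
      ((fderiv ℝ (fun z => Real.log (noisingPi (F k) t z)) (fun a => x (e ⟨k, a⟩))).comp (R k))
      x := by
    intro k
    have h1 : DifferentiableAt ℝ (fun z => Real.log (noisingPi (F k) t z))
        (R k x) :=
      (noisingPi_diff (F k) (hint k) t ht _).log
        (noisingPi_pos (F k) (hint k) (hpos k) t ht _).ne'
    exact h1.hasFDerivAt.comp x (R k).hasFDerivAt
  rw [hlog, (HasFDerivAt.fun_sum (u := Finset.univ) fun k _ => hd k).fderiv,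
    _root_.sum_apply, Finset.sum_eq_single k]
  · rw [ContinuousLinearMap.comp_apply]
    congr 1
    funext b
    change (Pi.single (e ⟨k, a⟩) (1 : ℝ) : ι → ℝ) (e ⟨k, b⟩) = _
    simp [Pi.single_apply]
  · intro k' _ hk
    rw [ContinuousLinearMap.comp_apply]
    have : R k' (Pi.single (e ⟨k, a⟩) 1) = 0 := by
      funext b
      change (Pi.single (e ⟨k, a⟩) (1 : ℝ) : ι → ℝ) (e ⟨k', b⟩) = _
      rw [Pi.single_eq_of_ne]
      · rfl
      · intro h
        exact hk (congrArg Sigma.fst (e.injective h))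
    rw [this, map_zero]
  · simp

theorem local_conditional_scores_exact_for_cpc
    (n : ℕ) {J : Type*} [Fintype J] [DecidableEq J]
    -- pairwise disjoint blocks M_j, with background block B
    (M : J → Finset (Fin n))
    (hdisj : ∀ j k : J, j ≠ k → Disjoint (M j) (M k))
    (B : Finset (Fin n)) (hB : B = (Finset.univ.biUnion fun j : J => M j)ᶜ)
    -- strictly positive integrable factors
    (g : ({i // i ∈ B} → ℝ) → ℝ)
    (f h : ∀ j : J, ({i // i ∈ M j} → ℝ) → ℝ)
    (hg_pos : ∀ z, 0 < g z) (hg_int : Integrable g)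
    (hf_pos : ∀ j z, 0 < f j z) (hf_int : ∀ j, Integrable (f j))
    (hh_pos : ∀ j z, 0 < h j z) (hh_int : ∀ j, Integrable (h j))
    -- the conditional projective composition family p_𝒥
    (p : Finset J → (Fin n → ℝ) → ℝ)
    (hp : ∀ (𝒥 : Finset J) (x : Fin n → ℝ),
      p 𝒥 x = g (fun i : {a // a ∈ B} => x i.1) *
        (∏ j ∈ 𝒥, f j (fun i : {a // a ∈ M j} => x i.1)) *
        ∏ j ∈ 𝒥ᶜ, h j (fun i : {a // a ∈ M j} => x i.1)) :
    ∀ t > (0 : ℝ), ∀ (𝒥 : Finset J) (x : Fin n → ℝ) (i : Fin n),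
      -- case i ∈ M_j with j ∈ 𝒥: the score follows the conditional factor f_j
      (∀ (j : J) (hij : i ∈ M j), j ∈ 𝒥 →
        fderiv ℝ (fun x' => Real.log (noisingPi (p 𝒥) t x')) x (Pi.single i 1)
          = fderiv ℝ (fun z => Real.log (noisingPi (f j) t z))
              (fun i' : {a // a ∈ M j} => x i'.1)
              (Pi.single (⟨i, hij⟩ : {a // a ∈ M j}) 1))
      -- case i ∈ M_j with j ∉ 𝒥: the score follows the unconditional factor h_j
      ∧ (∀ (j : J) (hij : i ∈ M j), j ∉ 𝒥 →
        fderiv ℝ (fun x' => Real.log (noisingPi (p 𝒥) t x')) x (Pi.single i 1)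
          = fderiv ℝ (fun z => Real.log (noisingPi (h j) t z))
              (fun i' : {a // a ∈ M j} => x i'.1)
              (Pi.single (⟨i, hij⟩ : {a // a ∈ M j}) 1))
      -- case i ∈ B: the score follows the background factor g
      ∧ (∀ hiB : i ∈ B,
        fderiv ℝ (fun x' => Real.log (noisingPi (p 𝒥) t x')) x (Pi.single i 1)
          = fderiv ℝ (fun z => Real.log (noisingPi g t z))
              (fun i' : {a // a ∈ B} => x i'.1)
              (Pi.single (⟨i, hiB⟩ : {a // a ∈ B}) 1)) := by
  intro t ht 𝒥 x i
  let M' : Option J → Finset (Fin n) := fun o => o.elim B M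
  let F : ∀ o : Option J, ({i // i ∈ M' o} → ℝ) → ℝ := fun o =>
    match o with
    | none => g
    | some j => if j ∈ 𝒥 then f j else h j
  have hbij : Function.Bijective (fun s : (Σ o, {i // i ∈ M' o}) => (s.2.1 : Fin n)) := by
    constructor
    · rintro ⟨o, a, ha⟩ ⟨o', b, hb⟩ hab
      change a = b at hab
      subst hab
      have : o = o' := by
        rcases o with _ | j <;> rcases o' with _ | k
        · rfl
        · change a ∈ B at ha
          change a ∈ M k at hb
          simp only [hB, Finset.mem_compl, Finset.mem_biUnion, Finset.mem_univ, true_and] at ha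
          exact absurd ⟨k, hb⟩ ha
        · change a ∈ B at hb
          change a ∈ M j at ha
          simp only [hB, Finset.mem_compl, Finset.mem_biUnion, Finset.mem_univ, true_and] at hb
          exact absurd ⟨j, ha⟩ hb
        · by_contra hne
          exact Finset.disjoint_left.1 (hdisj j k fun h => hne (congrArg some h)) ha hb
      subst this
      rfl
    · intro a
      by_cases ha : a ∈ B
      · exact ⟨⟨none, a, ha⟩, rfl⟩
      · simp only [hB, Finset.mem_compl, Finset.mem_biUnion, Finset.mem_univ, true_and,
          not_not] at ha
        obtain ⟨j, hj⟩ := ha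
        exact ⟨⟨some j, a, hj⟩, rfl⟩
  let e : (Σ o, {i // i ∈ M' o}) ≃ Fin n := Equiv.ofBijective _ hbij
  have hpos : ∀ o z, 0 < F o z := by
    rintro (_ | j) z
    · exact hg_pos z
    · change 0 < (if j ∈ 𝒥 then f j else h j) z
      split_ifs
      exacts [hf_pos j z, hh_pos j z]
  have hint : ∀ o, Integrable (F o) := by
    rintro (_ | j)
    · exact hg_int
    · change Integrable (if j ∈ 𝒥 then f j else h j)
      split_ifs
      exacts [hf_int j, hh_int j]
  have hpF : p 𝒥 = fun x => ∏ o, F o (fun a => x (e ⟨o, a⟩)) := by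
    funext x
    rw [hp, Fintype.prod_option, mul_assoc]
    congr 1
    rw [← Finset.prod_mul_prod_compl 𝒥]
    congr 1
    · refine Finset.prod_congr rfl fun j hj => ?_
      change _ = (if j ∈ 𝒥 then f j else h j) _
      rw [if_pos hj]
      rfl
    · refine Finset.prod_congr rfl fun j hj => ?_
      change _ = (if j ∈ 𝒥 then f j else h j) _
      rw [if_neg (Finset.mem_compl.1 hj)]
      rfl
  rw [hpF]
  have key := score_block e F hpos hint t ht x
  refine ⟨fun j hij hj => ?_, fun j hij hj => ?_, fun hiB => ?_⟩
  · have hFj : F (some j) = f j := if_pos hj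
    have := key (some j) ⟨i, hij⟩
    rw [hFj] at this
    exact this
  · have hFj : F (some j) = h j := if_neg hj
    have := key (some j) ⟨i, hij⟩
    rw [hFj] at this
    exact this
  · exact key none ⟨i, hiB⟩
end

section
/- (Mean-field KL bound.) Let E = E₀ × E₁ × ⋯ × E_m where each E_k = ℝ^{n_k}, let p be a strictly positive probability density on E, and for each k let q_k be a strictly positive probability density on E_k. For x ∈ E write x_k for its k-th block and x_{−k} for the remaining blocks, and define the conditional density p(x_k | x_{−k}) = p(x) / ∫_{E_k} p(x'_k, x_{−k}) dx'_k (the denominator assumed positive and finite everywhere). Assume all KL divergences below are finite. Then D_KL(p ‖ ⊗_{k=0}^m q_k) ≤ Σ_{k=0}^m sup_{x_{−k}} D_KL( p(· | x_{−k}) ‖ q_k ), where ⊗_k q_k denotes the product density x ↦ ∏_k q_k(x_k). -/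
open Real MeasureTheory

/-- The conditional density `p(x_k | x_{−k})`:
`p(x with k-th block replaced by y) / ∫ p(x with k-th block replaced by y') dy'`. -/
noncomputable def condDensity {m : ℕ} {nd : Fin (m + 1) → ℕ}
    (p : (∀ k, Fin (nd k) → ℝ) → ℝ) (k : Fin (m + 1))
    (x : ∀ k, Fin (nd k) → ℝ) (y : Fin (nd k) → ℝ) : ℝ :=
  p (Function.update x k y) / ∫ y', p (Function.update x k y')

/-- `D_KL(p(· | x_{−k}) ‖ q_k)`, the KL divergence of the conditional density of the
`k`-th block given the remaining blocks `x_{−k}` from `q_k`. -/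
noncomputable def condKL {m : ℕ} {nd : Fin (m + 1) → ℕ}
    (p : (∀ k, Fin (nd k) → ℝ) → ℝ) (q : ∀ k, (Fin (nd k) → ℝ) → ℝ)
    (k : Fin (m + 1)) (x : ∀ k, Fin (nd k) → ℝ) : ℝ :=
  ∫ y, condDensity p k x y * Real.log (condDensity p k x y / q k y)

set_option linter.unusedSectionVars false

section
variable {ι : Type*} [Fintype ι] [DecidableEq ι] {X : ι → Type*} [∀ i, MeasurableSpace (X i)]
  (ν : ∀ i, Measure (X i)) [∀ i, IsProbabilityMeasure (ν i)]

lemma mf_lintegral_update (k : ι) (f : (∀ i, X i) → ENNReal) (hf : Measurable f) :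
    ∫⁻ x, f x ∂Measure.pi ν = ∫⁻ x, ∫⁻ y, f (Function.update x k y) ∂ν k ∂Measure.pi ν := by
  have h := lmarginal_singleton (μ := ν) f k
  rw [← h]
  refine lintegral_eq_of_lmarginal_eq {k} hf (hf.lmarginal ν) ?_
  rw [lmarginal_singleton (lmarginal ν {k} f) k]
  funext x
  simp [lmarginal_update_of_mem]

lemma mf_measurable_update (k : ι) :
    Measurable (fun z : (∀ i, X i) × X k => Function.update z.1 k z.2) := by
  exact measurable_update'

lemma mf_mp (k : ι) : MeasurePreserving
    (fun z : (∀ i, X i) × X k => Function.update z.1 k z.2)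
    ((Measure.pi ν).prod (ν k)) (Measure.pi ν) := by
  refine ⟨mf_measurable_update k, ?_⟩
  refine Measure.ext_of_lintegral _ fun f hf => ?_
  rw [lintegral_map hf (mf_measurable_update k), mf_lintegral_update ν k f hf,
    lintegral_prod (fun z : (∀ i, X i) × X k => f (Function.update z.1 k z.2))
      (hf.comp (mf_measurable_update k)).aemeasurable]

lemma mf_lintegral_update' (k : ι) (f : (∀ i, X i) → ENNReal)
    (hf : AEMeasurable f (Measure.pi ν)) :
    ∫⁻ x, f x ∂Measure.pi ν = ∫⁻ x, ∫⁻ y, f (Function.update x k y) ∂ν k ∂Measure.pi ν := by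
  have h := mf_mp ν k
  have hf' : AEMeasurable (fun z : (∀ i, X i) × X k => f (Function.update z.1 k z.2))
    ((Measure.pi ν).prod (ν k)) := by
    exact hf.comp_quasiMeasurePreserving h.quasiMeasurePreserving
  rw [← lintegral_prod _ hf']
  conv_lhs => rw [← h.map_eq]
  rw [lintegral_map' (by rwa [h.map_eq]) h.measurable.aemeasurable]

lemma mf_nonneg {α : Type*} [MeasurableSpace α] {μ : Measure α} {f : α → ℝ}
    (hf : AEStronglyMeasurable f μ) (h0 : ∀ x, 0 ≤ f x) {c : ℝ} (hc : 0 ≤ c)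
    (h : ∫⁻ x, ENNReal.ofReal (f x) ∂μ ≤ ENNReal.ofReal c) :
    Integrable f μ ∧ ∫ x, f x ∂μ ≤ c := by
  constructor
  · refine ⟨hf, ?_⟩
    rw [hasFiniteIntegral_iff_ofReal (Filter.Eventually.of_forall h0)]
    exact h.trans_lt ENNReal.ofReal_lt_top
  · rw [integral_eq_lintegral_of_nonneg_ae (Filter.Eventually.of_forall h0) hf]
    exact ENNReal.toReal_le_of_le_ofReal hc h

lemma mf_mul_log {t : ℝ} (ht : 0 < t) : 0 ≤ t * Real.log t + 1 := by
  have h := Real.one_sub_inv_le_log_of_pos ht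
  have := mul_le_mul_of_nonneg_left h ht.le
  rw [mul_sub, mul_inv_cancel₀ ht.ne'] at this
  linarith

/-- the marginal -/
lemma mf_Z (k : ι) (ρ : (∀ i, X i) → ℝ) (hint : Integrable ρ (Measure.pi ν)) :
    Integrable (fun x => ∫ y, ρ (Function.update x k y) ∂ν k) (Measure.pi ν) ∧
    ∫ x, (∫ y, ρ (Function.update x k y) ∂ν k) ∂Measure.pi ν = ∫ x, ρ x ∂Measure.pi ν := by
  have h := mf_mp ν k
  have h1 : Integrable (fun z : (∀ i, X i) × X k => ρ (Function.update z.1 k z.2))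
    ((Measure.pi ν).prod (ν k)) := h.integrable_comp_of_integrable hint
  refine ⟨h1.integral_prod_left, ?_⟩
  rw [← integral_prod _ h1]
  conv_rhs => rw [← h.map_eq]
  rw [integral_map h.measurable.aemeasurable (by rw [h.map_eq]; exact hint.1)]

lemma mf_G (k : ι) (ρ Z : (∀ i, X i) → ℝ) (hpos : ∀ x, 0 < ρ x)
    (hint : Integrable ρ (Measure.pi ν)) (hmass : ∫ x, ρ x ∂Measure.pi ν = 1)
    (hZ : Z = fun x => ∫ y, ρ (Function.update x k y) ∂ν k) (hZpos : ∀ x, 0 < Z x)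
    (C : ℝ)
    (hR : ∀ x, Integrable (fun y => ρ (Function.update x k y) / Z x *
      Real.log (ρ (Function.update x k y) / Z x)) (ν k))
    (hC : ∀ x, ∫ y, ρ (Function.update x k y) / Z x *
      Real.log (ρ (Function.update x k y) / Z x) ∂ν k ≤ C) :
    Integrable (fun x => ρ x * Real.log (ρ x / Z x) + Z x) (Measure.pi ν) ∧
    ∫ x, (ρ x * Real.log (ρ x / Z x) + Z x) ∂Measure.pi ν ≤ C + 1 := by
  have hZi := mf_Z ν k ρ hint
  rw [← hZ, hmass] at hZi
  have hZi2 : ∫ x, Z x ∂Measure.pi ν = 1 := by rw [← hZi.2, hZ]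
  have hZu : ∀ x y, Z (Function.update x k y) = Z x := by intro x y; simp [hZ]
  have key : ∀ x y, ρ (Function.update x k y) *
      Real.log (ρ (Function.update x k y) / Z (Function.update x k y)) + Z (Function.update x k y)
      = Z x * (ρ (Function.update x k y) / Z x *
      Real.log (ρ (Function.update x k y) / Z x) + 1) := by
    intro x y
    have := (hZpos x).ne'
    rw [hZu]; field_simp
  have hnn : ∀ x y, 0 ≤ ρ (Function.update x k y) / Z x *
      Real.log (ρ (Function.update x k y) / Z x) + 1 := fun x y =>
    mf_mul_log (div_pos (hpos _) (hZpos _))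
  have hC1 : ∀ x, ∫ y, (ρ (Function.update x k y) / Z x *
      Real.log (ρ (Function.update x k y) / Z x) + 1) ∂ν k ≤ C + 1 := by
    intro x
    rw [integral_add (hR x) (integrable_const _)]
    simpa using hC x
  obtain ⟨x0⟩ : Nonempty (∀ i, X i) := nonempty_of_isProbabilityMeasure (Measure.pi ν)
  have hC0 : 0 ≤ C + 1 := (integral_nonneg (hnn x0)).trans (hC1 x0)
  have hm : AEStronglyMeasurable (fun x => ρ x * Real.log (ρ x / Z x) + Z x) (Measure.pi ν) := by
    have h1 := hint.1.aemeasurable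
    have h2 := hZi.1.1.aemeasurable
    exact ((h1.mul (h1.div h2).log).add h2).aestronglyMeasurable
  refine mf_nonneg hm ?_ hC0 ?_
  · intro x
    have := key x (x k)
    rw [Function.update_eq_self] at this
    rw [this]
    have := hnn x (x k)
    rw [Function.update_eq_self] at this
    exact mul_nonneg (hZpos _).le this
  · rw [mf_lintegral_update' ν k _ hm.aemeasurable.ennreal_ofReal]
    calc _ ≤ ∫⁻ x, ENNReal.ofReal (C + 1) * ENNReal.ofReal (Z x) ∂Measure.pi ν := by
          refine lintegral_mono fun x => ?_
          simp_rw [key, ENNReal.ofReal_mul (hZpos x).le]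
          rw [lintegral_const_mul' _ _ ENNReal.ofReal_ne_top, mul_comm]
          gcongr
          have hi : Integrable (fun y => ρ (Function.update x k y) / Z x *
            Real.log (ρ (Function.update x k y) / Z x) + 1) (ν k) :=
            (hR x).add (integrable_const _)
          rw [← ofReal_integral_eq_lintegral_ofReal hi
            (Filter.Eventually.of_forall (hnn x))]
          exact ENNReal.ofReal_le_ofReal (hC1 x)
      _ = ENNReal.ofReal (C + 1) := by
          rw [lintegral_const_mul' _ _ ENNReal.ofReal_ne_top,
            ← ofReal_integral_eq_lintegral_ofReal hZi.1
            (Filter.Eventually.of_forall fun x => (hZpos x).le), hZi2]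
          simp

lemma mf_T (k : ι) (Z : (∀ i, X i) → ℝ) (A A' : (∀ i, X i) → ENNReal)
    (hA : Measurable A) (hA' : Measurable A')
    (hAA : ∀ x, A x = ∫⁻ y, A' (Function.update x k y) ∂ν k)
    (hZi : Integrable Z (Measure.pi ν)) (hZ1 : ∫ x, Z x ∂Measure.pi ν = 1)
    (hZu : ∀ x y, Z (Function.update x k y) = Z x) (hZpos : ∀ x, 0 < Z x) :
    Integrable (fun x => (A' x / A x).toReal * Z x) (Measure.pi ν) ∧
    ∫ x, (A' x / A x).toReal * Z x ∂Measure.pi ν ≤ 1 := by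
  have hAu : ∀ x y, A (Function.update x k y) = A x := by intro x y; simp [hAA]
  have hZm := hZi.1.aemeasurable
  have hm : AEMeasurable (fun x => (A' x / A x).toReal * Z x) (Measure.pi ν) :=
    (hA'.div hA).ennreal_toReal.aemeasurable.mul hZm
  refine mf_nonneg hm.aestronglyMeasurable
    (fun x => mul_nonneg ENNReal.toReal_nonneg (hZpos x).le) zero_le_one ?_
  calc _ ≤ ∫⁻ x, (A' x / A x) * ENNReal.ofReal (Z x) ∂Measure.pi ν := by
        refine lintegral_mono fun x => ?_
        rw [ENNReal.ofReal_mul ENNReal.toReal_nonneg]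
        gcongr
        exact ENNReal.ofReal_toReal_le
    _ = ∫⁻ x, (∫⁻ y, A' (Function.update x k y) / A x * ENNReal.ofReal (Z x) ∂ν k)
          ∂Measure.pi ν := by
        rw [mf_lintegral_update' ν k (fun x => A' x / A x * ENNReal.ofReal (Z x)) ((hA'.div hA).aemeasurable.mul hZm.ennreal_ofReal)]
        simp_rw [hAu, hZu]
    _ ≤ ∫⁻ x, ENNReal.ofReal (Z x) ∂Measure.pi ν := by
        refine lintegral_mono fun x => ?_
        rw [lintegral_mul_const' _ _ ENNReal.ofReal_ne_top]
        simp_rw [div_eq_mul_inv]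
        have hq : Measurable (fun y => A' (Function.update x k y)) :=
          hA'.comp (measurable_update x)
        rw [lintegral_mul_const _ hq, ← hAA]
        calc _ ≤ 1 * ENNReal.ofReal (Z x) := by
              gcongr
              exact ENNReal.mul_inv_le_one _
          _ = _ := one_mul _
    _ ≤ _ := by
        rw [← ofReal_integral_eq_lintegral_ofReal hZi
            (Filter.Eventually.of_forall fun x => (hZpos x).le), hZ1]

lemma mf_lmarginal_pos (s : Finset ι) (F : (∀ i, X i) → ENNReal) (hF : Measurable F)
    (h : ∀ x, 0 < F x) (x : ∀ i, X i) : 0 < lmarginal ν s F x := by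
  unfold lmarginal
  have hq : Measurable (fun y : ∀ i : s, X i => F (Function.updateFinset x s y)) :=
    hF.comp measurable_updateFinset
  rw [lintegral_pos_iff_support hq]
  have : Function.support (fun y : ∀ i : s, X i => F (Function.updateFinset x s y)) = Set.univ := by
    ext y; simp [(h _).ne']
  rw [this]
  simp

lemma mf_lmarginal_int (s : Finset ι) (F : (∀ i, X i) → ENNReal) (hF : Measurable F) :
    ∫⁻ x, lmarginal ν s F x ∂Measure.pi ν = ∫⁻ x, F x ∂Measure.pi ν := by
  refine lintegral_eq_of_lmarginal_eq s (hF.lmarginal ν) hF ?_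
  funext x
  conv_lhs => unfold lmarginal
  have : ∀ y, lmarginal ν s F (Function.updateFinset x s y) = lmarginal ν s F x := by
    intro y
    refine lmarginal_congr ν F fun i hi => ?_
    simp [Function.updateFinset, hi]
  change ∫⁻ y, lmarginal ν s F (Function.updateFinset x s y) ∂_ = _
  simp [this]

end

lemma mf_main (m : ℕ) {X : Fin (m+1) → Type*} [∀ i, MeasurableSpace (X i)]
    (ν : ∀ i, Measure (X i)) [∀ i, IsProbabilityMeasure (ν i)]
    (ρ : (∀ i, X i) → ℝ) (Z : Fin (m+1) → (∀ i, X i) → ℝ) (hpos : ∀ x, 0 < ρ x)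
    (hint : Integrable ρ (Measure.pi ν)) (hmass : ∫ x, ρ x ∂Measure.pi ν = 1)
    (hZ : ∀ k x, Z k x = ∫ y, ρ (Function.update x k y) ∂ν k) (hZpos : ∀ k x, 0 < Z k x)
    (C : Fin (m+1) → ℝ)
    (hKL : Integrable (fun x => ρ x * Real.log (ρ x)) (Measure.pi ν))
    (hR : ∀ k x, Integrable (fun y => ρ (Function.update x k y) / Z k x *
      Real.log (ρ (Function.update x k y) / Z k x)) (ν k))
    (hC : ∀ k x, ∫ y, ρ (Function.update x k y) / Z k x *
      Real.log (ρ (Function.update x k y) / Z k x) ∂ν k ≤ C k) :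
    ∫ x, ρ x * Real.log (ρ x) ∂Measure.pi ν ≤ ∑ k, C k := by
  have hZ' : ∀ k, Z k = fun x => ∫ y, ρ (Function.update x k y) ∂ν k := fun k => funext (hZ k)
  have hZi : ∀ k, Integrable (Z k) (Measure.pi ν) := fun k => by
    rw [hZ']; exact (mf_Z ν k ρ hint).1
  have hZ1 : ∀ k, ∫ x, Z k x ∂Measure.pi ν = 1 := fun k => by
    rw [hZ']; exact (mf_Z ν k ρ hint).2.trans hmass
  have hZu : ∀ k x y, Z k (Function.update x k y) = Z k x := by intro k x y; simp [hZ']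
  have hG := fun k => mf_G ν k ρ (Z k) hpos hint hmass (hZ' k) (hZpos k) (C k) (hR k) (hC k)
  -- measurable positive version
  obtain ⟨F, hF, hFpos, hFρ⟩ : ∃ F : (∀ i, X i) → ENNReal, Measurable F ∧ (∀ x, 0 < F x) ∧
      ∀ᵐ x ∂Measure.pi ν, F x = ENNReal.ofReal (ρ x) := by
    have hm := hint.1.aemeasurable
    refine ⟨fun x => if 0 < hm.mk ρ x then ENNReal.ofReal (hm.mk ρ x) else 1, ?_, ?_, ?_⟩
    · exact Measurable.ite (measurableSet_lt measurable_const hm.measurable_mk)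
        hm.measurable_mk.ennreal_ofReal measurable_const
    · intro x
      dsimp only
      split_ifs with h
      · simpa using h
      · simp
    · filter_upwards [hm.ae_eq_mk] with x hx
      rw [← hx, if_pos (hpos x)]
  have hF1 : ∫⁻ x, F x ∂Measure.pi ν = 1 := by
    rw [lintegral_congr_ae hFρ, ← ofReal_integral_eq_lintegral_ofReal hint
      (Filter.Eventually.of_forall fun x => (hpos x).le), hmass, ENNReal.ofReal_one]
  let S : ℕ → Finset (Fin (m+1)) := fun j => Finset.univ.filter fun i => j ≤ i.val
  let A : ℕ → (∀ i, X i) → ENNReal := fun j => lmarginal ν (S j) F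
  have hAm : ∀ j, Measurable (A j) := fun j => hF.lmarginal ν
  have hA0 : ∀ x, A 0 x = 1 := by
    intro x
    have : S 0 = Finset.univ := by simp [S]
    simp only [A, this, lmarginal_univ, hF1]
  have hAlast : A (m+1) = F := by
    have : S (m+1) = ∅ := by
      ext i; simp [S]; omega
    simp only [A, this, lmarginal_empty]
  have hAstep : ∀ (k : Fin (m+1)) x,
      A k x = ∫⁻ y, A (k+1) (Function.update x k y) ∂ν k := by
    intro k x
    have : S k = insert k (S (k+1)) := by
      ext i; simp [S, Fin.ext_iff]; omega
    simp only [A, this]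
    exact lmarginal_insert F hF (by simp [S]) x
  have hApos : ∀ j x, 0 < A j x := fun j x => mf_lmarginal_pos ν (S j) F hF hFpos x
  have hAfin : ∀ᵐ x ∂Measure.pi ν, ∀ j, A j x < ⊤ := by
    rw [ae_all_iff]
    intro j
    refine ae_lt_top (hAm j) ?_
    simp only [A]
    rw [mf_lmarginal_int ν (S j) F hF, hF1]; simp
  have hT := fun k : Fin (m+1) => mf_T ν k (Z k) (A k) (A (k+1)) (hAm _) (hAm _) (hAstep k)
    (hZi k) (hZ1 k) (hZu k) (hZpos k)
  have hbound : ∀ᵐ x ∂Measure.pi ν, ρ x * Real.log (ρ x) ≤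
      ∑ k : Fin (m+1), ((ρ x * Real.log (ρ x / Z k x) + Z k x)
        + (A (k+1) x / A k x).toReal * Z k x - Z k x - ρ x) := by
    filter_upwards [hAfin, hFρ] with x hx hFx
    let a : ℕ → ℝ := fun j => (A j x).toReal
    have ha : ∀ j, 0 < a j := fun j => ENNReal.toReal_pos (hApos j x).ne' (hx j).ne
    have ha0 : a 0 = 1 := by simp [a, hA0]
    have hal : a (m+1) = ρ x := by
      simp only [a, hAlast, hFx]; exact ENNReal.toReal_ofReal (hpos x).le
    have htel : Real.log (ρ x) =
        ∑ k : Fin (m+1), (Real.log (a (k+1)) - Real.log (a k)) := by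
      rw [Fin.sum_univ_eq_sum_range (fun k => Real.log (a (k+1)) - Real.log (a k)) (m+1),
        Finset.sum_range_sub (fun k => Real.log (a k)), hal, ha0]
      simp
    conv_lhs => arg 2; rw [htel]
    rw [Finset.mul_sum]
    refine Finset.sum_le_sum fun k _ => ?_
    rw [ENNReal.toReal_div]
    change _ ≤ _ + a (k+1) / a k * Z k x - _ - _
    have h1 := ha (k+1)
    have h2 := ha k
    have h3 := hZpos k x
    have h4 := hpos x
    have h5 := Real.log_le_sub_one_of_pos (x := a (k+1) / a k * Z k x / ρ x) (by positivity)
    rw [Real.log_div (by positivity) h4.ne', Real.log_mul (by positivity) h3.ne',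
      Real.log_div h1.ne' h2.ne'] at h5
    have h6 := mul_le_mul_of_nonneg_left h5 h4.le
    have h7 : ρ x * (a (k+1) / a k * Z k x / ρ x - 1) = a (k+1) / a k * Z k x - ρ x := by
      field_simp
    rw [h7] at h6
    rw [Real.log_div h4.ne' h3.ne']
    linarith
  have hI : ∀ k : Fin (m+1), Integrable (fun x => (ρ x * Real.log (ρ x / Z k x) + Z k x)
        + (A (k+1) x / A k x).toReal * Z k x - Z k x - ρ x) (Measure.pi ν) := fun k =>
    (((hG k).1.add (hT k).1).sub (hZi k)).sub hint
  refine (integral_mono_ae hKL (integrable_finsetSum _ fun k _ => hI k) hbound).trans ?_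
  rw [integral_finsetSum _ fun k _ => hI k]
  refine Finset.sum_le_sum fun k _ => ?_
  have e1 := integral_sub (((hG k).1.add (hT k).1).sub (hZi k)) hint
  have e2 := integral_sub ((hG k).1.add (hT k).1) (hZi k)
  have e3 := integral_add (hG k).1 (hT k).1
  simp only [Pi.add_apply, Pi.sub_apply] at e1 e2 e3
  rw [e1, e2, e3, hZ1, hmass]
  linarith [(hG k).2, (hT k).2]

lemma mf_pi_withDensity {ι : Type*} [Fintype ι] {X : ι → Type*} [∀ i, MeasurableSpace (X i)]
    (μ : ∀ i, Measure (X i)) [∀ i, SigmaFinite (μ i)] (q : ∀ i, X i → ℝ)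
    (hq : ∀ i x, 0 < q i x) (hi : ∀ i, Integrable (q i) (μ i)) :
    Measure.pi (fun i => (μ i).withDensity fun y => ENNReal.ofReal (q i y)) =
      (Measure.pi μ).withDensity fun x => ENNReal.ofReal (∏ i, q i (x i)) := by
  have hsf : ∀ i, SigmaFinite ((μ i).withDensity fun y => ENNReal.ofReal (q i y)) := fun i =>
    SigmaFinite.withDensity_ofReal _
  refine Measure.pi_eq fun s hs => ?_
  have hi' : ∀ i, Integrable (q i) ((μ i).restrict (s i)) := fun i => (hi i).restrict
  rw [withDensity_apply _ (MeasurableSet.univ_pi hs), Measure.restrict_pi_pi,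
    ← ofReal_integral_eq_lintegral_ofReal (Integrable.fintype_prod_dep hi')
      (Filter.Eventually.of_forall fun x => Finset.prod_nonneg fun i _ => (hq i _).le),
    integral_fintype_prod_eq_prod,
    ENNReal.ofReal_prod_of_nonneg fun i _ => integral_nonneg fun y => (hq i y).le]
  refine Finset.prod_congr rfl fun i _ => ?_
  rw [withDensity_apply _ (hs i), ← ofReal_integral_eq_lintegral_ofReal (hi' i)
    (Filter.Eventually.of_forall fun x => (hq i x).le)]

lemma mf_wd {α : Type*} [MeasurableSpace α] (μ : Measure α) (q : α → ℝ) (hq : ∀ x, 0 < q x)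
    (hi : Integrable q μ) (g h : α → ℝ) (hgh : ∀ x, h x = q x * g x) :
    (Integrable h μ → Integrable g (μ.withDensity fun y => ENNReal.ofReal (q y))) ∧
    ∫ x, g x ∂(μ.withDensity fun y => ENNReal.ofReal (q y)) = ∫ x, h x ∂μ := by
  have hm := hi.1.aemeasurable.ennreal_ofReal
  have ht : ∀ᵐ x ∂μ, ENNReal.ofReal (q x) < ⊤ := Filter.Eventually.of_forall fun x => by simp
  have e : (fun x => (ENNReal.ofReal (q x)).toReal • g x) = h := by
    funext x
    rw [ENNReal.toReal_ofReal (hq x).le, hgh, smul_eq_mul]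
  constructor
  · intro hh
    rw [integrable_withDensity_iff_integrable_smul₀' hm ht, e]
    exact hh
  · rw [integral_withDensity_eq_integral_toReal_smul₀ hm ht, e]

theorem mean_field_kl_bound
    (m : ℕ) (nd : Fin (m + 1) → ℕ)
    (p : (∀ k, Fin (nd k) → ℝ) → ℝ)
    (q : ∀ k, (Fin (nd k) → ℝ) → ℝ)
    -- p is a strictly positive probability density on E = E₀ × ⋯ × E_m
    (hp_pos : ∀ x, 0 < p x) (hp_int : Integrable p) (hp_mass : ∫ x, p x = 1)
    -- each q_k is a strictly positive probability density on E_k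
    (hq_pos : ∀ k z, 0 < q k z) (hq_int : ∀ k, Integrable (q k))
    (hq_mass : ∀ k, ∫ z, q k z = 1)
    -- the normalizing denominators are positive and finite everywhere
    (hZ_int : ∀ (k) (x : ∀ k, Fin (nd k) → ℝ),
      Integrable (fun y => p (Function.update x k y)))
    (hZ_pos : ∀ (k) (x : ∀ k, Fin (nd k) → ℝ),
      0 < ∫ y, p (Function.update x k y))
    -- all KL divergences below are finite
    (hKL_int : Integrable (fun x => p x * Real.log (p x / ∏ k, q k (x k))))
    (hcondKL_int : ∀ (k) (x : ∀ k, Fin (nd k) → ℝ),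
      Integrable (fun y => condDensity p k x y * Real.log (condDensity p k x y / q k y)))
    (hcondKL_bdd : ∀ k, BddAbove (Set.range fun x : ∀ k, Fin (nd k) → ℝ => condKL p q k x)) :
    -- D_KL(p ‖ ⊗_k q_k) ≤ Σ_k sup_{x_{−k}} D_KL(p(·|x_{−k}) ‖ q_k)
    (∫ x, p x * Real.log (p x / ∏ k, q k (x k)))
      ≤ ∑ k, ⨆ x : ∀ k, Fin (nd k) → ℝ, condKL p q k x := by
  let W : (∀ k, Fin (nd k) → ℝ) → ℝ := fun x => ∏ k, q k (x k)
  let V : Fin (m+1) → (∀ k, Fin (nd k) → ℝ) → ℝ := fun k x =>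
    ∏ i ∈ Finset.univ.erase k, q i (x i)
  have hW : ∀ x, 0 < W x := fun x => Finset.prod_pos fun i _ => hq_pos i _
  have hV : ∀ k x, 0 < V k x := fun k x => Finset.prod_pos fun i _ => hq_pos i _
  have hWu : ∀ k x y, W (Function.update x k y) = q k y * V k x := by
    intro k x y
    simp only [W, V]
    rw [← Finset.mul_prod_erase _ _ (Finset.mem_univ k), Function.update_self]
    congr 1
    refine Finset.prod_congr rfl fun i hi => ?_
    rw [Function.update_of_ne (Finset.ne_of_mem_erase hi)]
  have hWi : Integrable W := Integrable.fintype_prod_dep hq_int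
  let ν : ∀ k, Measure (Fin (nd k) → ℝ) := fun k =>
    volume.withDensity fun y => ENNReal.ofReal (q k y)
  have hν : ∀ k, IsProbabilityMeasure (ν k) := fun k => by
    constructor
    simp only [ν]
    rw [withDensity_apply _ MeasurableSet.univ, Measure.restrict_univ,
      ← ofReal_integral_eq_lintegral_ofReal (hq_int k)
      (Filter.Eventually.of_forall fun x => (hq_pos k x).le), hq_mass, ENNReal.ofReal_one]
  have hpi : Measure.pi ν = volume.withDensity fun x => ENNReal.ofReal (W x) :=
    mf_pi_withDensity (fun _ => volume) q hq_pos hq_int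
  let ρ : (∀ k, Fin (nd k) → ℝ) → ℝ := fun x => p x / W x
  let Z : Fin (m+1) → (∀ k, Fin (nd k) → ℝ) → ℝ := fun k x =>
    (∫ y, p (Function.update x k y)) / V k x
  have hratio : ∀ k x y, ρ (Function.update x k y) / Z k x = condDensity p k x y / q k y := by
    intro k x y
    simp only [ρ, Z, condDensity, hWu]
    have h1 := (hV k x).ne'
    have h2 := (hq_pos k y).ne'
    have h3 := (hZ_pos k x).ne'
    field_simp
  have e1 := mf_wd volume W hW hWi ρ p fun x => by
    simp only [ρ]; rw [mul_div_cancel₀ _ (hW x).ne']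
  have e2 := mf_wd volume W hW hWi (fun x => ρ x * Real.log (ρ x))
    (fun x => p x * Real.log (p x / ∏ k, q k (x k))) fun x => by
      change _ = W x * (p x / W x * Real.log (p x / W x))
      rw [← mul_assoc, mul_div_cancel₀ _ (hW x).ne']
  have e3 := fun k x => mf_wd volume (q k) (hq_pos k) (hq_int k)
    (fun y => ρ (Function.update x k y)) (fun y => p (Function.update x k y) / V k x) fun y => by
      simp only [ρ, hWu]
      have h1 := (hV k x).ne'
      have h2 := (hq_pos k y).ne'
      field_simp
  have e4 := fun k x => mf_wd volume (q k) (hq_pos k) (hq_int k)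
    (fun y => ρ (Function.update x k y) / Z k x * Real.log (ρ (Function.update x k y) / Z k x))
    (fun y => condDensity p k x y * Real.log (condDensity p k x y / q k y)) fun y => by
      rw [hratio, ← mul_assoc, mul_div_cancel₀ _ (hq_pos k y).ne']
  rw [← hpi] at e1 e2
  rw [← e2.2]
  refine mf_main m ν ρ Z (fun x => div_pos (hp_pos x) (hW x)) (e1.1 hp_int)
    (e1.2.trans hp_mass) (fun k x => ?_) (fun k x => div_pos (hZ_pos k x) (hV k x)) _
    (e2.1 hKL_int) (fun k x => (e4 k x).1 (hcondKL_int k x)) (fun k x => ?_)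
  · rw [(e3 k x).2, integral_div]
  · rw [(e4 k x).2]
    exact le_ciSup (hcondKL_bdd k) x
end
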